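/- Let n ≥ 2. In M_{n²}(ℂ) with its standard (entrywise) topology, let 𝔯 denote the set of solutions of the quantum Yang–Baxter equation and let 𝔯′ denote the set of matrices satisfying the modified quantum Yang–Baxter equation for some nonzero parameter λ ∈ ℂ. Then the closure of 𝔯′ minus 𝔯′ is contained in 𝔯: every matrix that is a limit of solutions of the modified equation but is not itself a solution of the modified equation (for any nonzero λ) satisfies the quantum Yang–Baxter equation. (Such solutions are called boundary solutions of the quantum Yang–Baxter equation.) -/

import Mathlib

open Matrix

namespace Stmt3

variable {n : ℕ}

/-- `R ⊗ I` acting in tensor factors 1 and 2 of `ℂⁿ ⊗ ℂⁿ ⊗ ℂⁿ`. -/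
def lift12 (R : Matrix (Fin n × Fin n) (Fin n × Fin n) ℂ) :
    Matrix (Fin n × Fin n × Fin n) (Fin n × Fin n × Fin n) ℂ :=
  fun i j => R (i.1, i.2.1) (j.1, j.2.1) * (if i.2.2 = j.2.2 then 1 else 0)

/-- `I ⊗ R` acting in tensor factors 2 and 3. -/
def lift23 (R : Matrix (Fin n × Fin n) (Fin n × Fin n) ℂ) :
    Matrix (Fin n × Fin n × Fin n) (Fin n × Fin n × Fin n) ℂ :=
  fun i j => (if i.1 = j.1 then 1 else 0) * R (i.2.1, i.2.2) (j.2.1, j.2.2)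

/-- `R` acting in tensor factors 1 and 3; equal to `(P⊗I)(I⊗R)(P⊗I)` with `P` the flip. -/
def lift13 (R : Matrix (Fin n × Fin n) (Fin n × Fin n) ℂ) :
    Matrix (Fin n × Fin n × Fin n) (Fin n × Fin n × Fin n) ℂ :=
  fun i j => R (i.1, i.2.2) (j.1, j.2.2) * (if i.2.1 = j.2.1 then 1 else 0)

/-- The permutation matrix `σ` with `σ(u⊗v⊗w) = w⊗u⊗v`. -/
def sigma3 : Matrix (Fin n × Fin n × Fin n) (Fin n × Fin n × Fin n) ℂ :=
  fun i j => if i.1 = j.2.2 ∧ i.2.1 = j.1 ∧ i.2.2 = j.2.1 then 1 else 0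

/-- The permutation matrix `τ` with `τ(u⊗v⊗w) = v⊗w⊗u`. -/
def tau3 : Matrix (Fin n × Fin n × Fin n) (Fin n × Fin n × Fin n) ℂ :=
  fun i j => if i.1 = j.2.1 ∧ i.2.1 = j.2.2 ∧ i.2.2 = j.1 then 1 else 0

/-- The quantum Yang-Baxter equation `R₁₂R₁₃R₂₃ = R₂₃R₁₃R₁₂`. -/
def QYBE (R : Matrix (Fin n × Fin n) (Fin n × Fin n) ℂ) : Prop :=
  lift12 R * lift13 R * lift23 R = lift23 R * lift13 R * lift12 R

/-- The modified quantum Yang-Baxter equation with parameter `l`. -/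
def MQYBE (R : Matrix (Fin n × Fin n) (Fin n × Fin n) ℂ) (l : ℂ) : Prop :=
  lift12 R * lift13 R * lift23 R - lift23 R * lift13 R * lift12 R =
    l • (sigma3 * lift12 R - tau3 * lift23 R)

/-- The set of solutions of the quantum Yang–Baxter equation. -/
def qybeSet (n : ℕ) : Set (Matrix (Fin n × Fin n) (Fin n × Fin n) ℂ) :=
  {R | QYBE R}

/-- The set of solutions of the modified quantum Yang–Baxter equation for some nonzero
parameter. -/
def mqybeSet (n : ℕ) : Set (Matrix (Fin n × Fin n) (Fin n × Fin n) ℂ) :=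
  {R | ∃ l : ℂ, l ≠ 0 ∧ MQYBE R l}

lemma sigma3_mul (M : Matrix (Fin n × Fin n × Fin n) (Fin n × Fin n × Fin n) ℂ)
    (a b c : Fin n) (j : Fin n × Fin n × Fin n) :
    ((sigma3 * M : Matrix (Fin n × Fin n × Fin n) (Fin n × Fin n × Fin n) ℂ)) (a, b, c) j = M (b, c, a) j := by
  rw [Matrix.mul_apply, Finset.sum_eq_single (b, c, a)]
  · simp [sigma3]
  · rintro ⟨x, y, z⟩ - h
    have : ¬ (a = z ∧ b = x ∧ c = y) := by
      rintro ⟨rfl, rfl, rfl⟩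
      exact h rfl
    simp [sigma3, this]
  · simp

lemma tau3_mul (M : Matrix (Fin n × Fin n × Fin n) (Fin n × Fin n × Fin n) ℂ)
    (a b c : Fin n) (j : Fin n × Fin n × Fin n) :
    ((tau3 * M : Matrix (Fin n × Fin n × Fin n) (Fin n × Fin n × Fin n) ℂ)) (a, b, c) j = M (c, a, b) j := by
  rw [Matrix.mul_apply, Finset.sum_eq_single (c, a, b)]
  · simp [tau3]
  · rintro ⟨x, y, z⟩ - h
    have : ¬ (a = y ∧ b = z ∧ c = x) := by
      rintro ⟨rfl, rfl, rfl⟩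
      exact h rfl
    simp [tau3, this]
  · simp

/-- If the right side of the modified equation vanishes, `R` is a multiple of the flip. -/
lemma eq_flip (hn : 2 ≤ n) (R : Matrix (Fin n × Fin n) (Fin n × Fin n) ℂ)
    (h : sigma3 * lift12 R - tau3 * lift23 R = 0) :
    ∃ c : ℂ, ∀ i j k l, R (i, j) (k, l) = if i = l ∧ j = k then c else 0 := by
  have key : ∀ i1 i2 i3 j1 j2 j3 : Fin n,
      R (i2, i3) (j1, j2) * (if i1 = j3 then 1 else 0) =
        (if i3 = j1 then 1 else 0) * R (i1, i2) (j2, j3) := by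
    intro i1 i2 i3 j1 j2 j3
    have := congrFun (congrFun h (i1, i2, i3)) (j1, j2, j3)
    rw [Matrix.sub_apply, sigma3_mul, tau3_mul] at this
    simpa [lift12, lift23, sub_eq_zero] using this
  have h0 : ∀ i j k l : Fin n, j ≠ k → R (i, j) (k, l) = 0 := by
    intro i j k l hjk
    simpa [hjk] using key i i j k l i
  have h1 : ∀ i j l m : Fin n, R (i, j) (j, l) = R (m, i) (l, m) := by
    intro i j l m
    simpa using key m i j j l m
  let z : Fin n := ⟨0, by omega⟩
  refine ⟨R (z, z) (z, z), ?_⟩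
  intro i j k l
  by_cases hjk : j = k
  · subst hjk
    by_cases hil : i = l
    · subst hil
      simp only [and_self, if_true]
      rw [h1 i j i z, h1 z i z z]
    · rw [h1 i j l z, h0 _ _ _ _ hil]
      simp [hil]
  · rw [h0 _ _ _ _ hjk]
    simp [hjk]

lemma flip_qybe (R : Matrix (Fin n × Fin n) (Fin n × Fin n) ℂ) (c : ℂ)
    (h : ∀ i j k l, R (i, j) (k, l) = if i = l ∧ j = k then c else 0) : QYBE R := by
  have m12 : ∀ (M : Matrix (Fin n × Fin n × Fin n) (Fin n × Fin n × Fin n) ℂ) x y z j,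
      (lift12 R * M) (x, y, z) j = c * M (y, x, z) j := by
    intro M x y z j
    rw [Matrix.mul_apply, Finset.sum_eq_single (y, x, z)]
    · simp [lift12, h]
    · rintro ⟨x', y', z'⟩ - hne
      simp only [lift12, h]
      grind
    · simp
  have m13 : ∀ (M : Matrix (Fin n × Fin n × Fin n) (Fin n × Fin n × Fin n) ℂ) x y z j,
      (lift13 R * M) (x, y, z) j = c * M (z, y, x) j := by
    intro M x y z j
    rw [Matrix.mul_apply, Finset.sum_eq_single (z, y, x)]
    · simp [lift13, h]
    · rintro ⟨x', y', z'⟩ - hne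
      simp only [lift13, h]
      grind
    · simp
  have m23 : ∀ (M : Matrix (Fin n × Fin n × Fin n) (Fin n × Fin n × Fin n) ℂ) x y z j,
      (lift23 R * M) (x, y, z) j = c * M (x, z, y) j := by
    intro M x y z j
    rw [Matrix.mul_apply, Finset.sum_eq_single (x, z, y)]
    · simp [lift23, h]
    · rintro ⟨x', y', z'⟩ - hne
      simp only [lift23, h]
      grind
    · simp
  unfold QYBE
  ext ⟨x, y, z⟩ ⟨u, v, w⟩
  rw [Matrix.mul_assoc, Matrix.mul_assoc, m12, m13, m23, m13]
  simp only [lift12, lift23, h]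
  grind

lemma continuous_lifts : Continuous (lift12 (n := n)) ∧ Continuous (lift13 (n := n)) ∧
    Continuous (lift23 (n := n)) := by
  refine ⟨?_, ?_, ?_⟩ <;> refine continuous_matrix fun i j => ?_
  · exact (continuous_id.matrix_elem _ _).mul continuous_const
  · exact (continuous_id.matrix_elem _ _).mul continuous_const
  · exact continuous_const.mul (continuous_id.matrix_elem _ _)

/-- Boundary solutions: every matrix in the closure of the set of solutions of the modified
quantum Yang–Baxter equation which is not itself such a solution satisfies the quantum
Yang–Baxter equation. -/
theorem closure_mqybe_diff_subset_qybe (n : ℕ) (hn : 2 ≤ n) :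
    closure (mqybeSet n) \ mqybeSet n ⊆ qybeSet n := by
  rintro R ⟨hR, hR'⟩
  let F : Matrix (Fin n × Fin n) (Fin n × Fin n) ℂ →
      Matrix (Fin n × Fin n × Fin n) (Fin n × Fin n × Fin n) ℂ := fun R =>
    lift12 R * lift13 R * lift23 R - lift23 R * lift13 R * lift12 R
  let G : Matrix (Fin n × Fin n) (Fin n × Fin n) ℂ →
      Matrix (Fin n × Fin n × Fin n) (Fin n × Fin n × Fin n) ℂ := fun R =>
    sigma3 * lift12 R - tau3 * lift23 R
  obtain ⟨c12, c13, c23⟩ := continuous_lifts (n := n)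
  have hF : Continuous F :=
    ((c12.matrix_mul c13).matrix_mul c23).sub ((c23.matrix_mul c13).matrix_mul c12)
  have hG : Continuous G :=
    (continuous_const.matrix_mul c12).sub (continuous_const.matrix_mul c23)
  have key : ∀ a b c d, F R a b * G R c d = F R c d * G R a b := by
    intro a b c d
    have hcl : IsClosed {S | F S a b * G S c d = F S c d * G S a b} :=
      isClosed_eq ((hF.matrix_elem a b).mul (hG.matrix_elem c d))
        ((hF.matrix_elem c d).mul (hG.matrix_elem a b))
    refine closure_minimal ?_ hcl hR
    rintro S ⟨l, -, hS⟩
    have hS' : F S = l • G S := hS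
    simp only [Set.mem_ofPred_eq, hS', Matrix.smul_apply, smul_eq_mul]
    ring
  by_cases hG0 : G R = 0
  · obtain ⟨c, hc⟩ := eq_flip hn R hG0
    exact flip_qybe R c hc
  · obtain ⟨c, d, hcd⟩ : ∃ c d, G R c d ≠ 0 := by
      by_contra! hcon
      exact hG0 (Matrix.ext hcon)
    have hFG : F R = (F R c d / G R c d) • G R := by
      ext a b
      rw [Matrix.smul_apply, smul_eq_mul, div_mul_eq_mul_div, eq_div_iff hcd]
      exact key a b c d
    by_cases hl : F R c d / G R c d = 0
    · rw [hl, zero_smul] at hFG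
      exact sub_eq_zero.mp hFG
    · exact absurd ⟨_, hl, hFG⟩ hR'

end Stmt3
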